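/- The series identity ∑_{n≥1} (−1/4)^n · (1)_n / ((1/2)_n) · [ (10n−3) H_n^{(3)} / (3 n² (2n−1)) − (38n−17)/(3 n^5 (2n−1)) ] = −(16/3) ζ(5) + (2/3) π² ζ(3) holds, where ζ is the Riemann zeta function. -/

import Mathlib

/-- The rising factorial (Pochhammer symbol) `(a)ₙ = a(a+1)⋯(a+n-1)`. -/
noncomputable def risingFactorial (a : ℝ) (n : ℕ) : ℝ :=
  ∏ i ∈ Finset.range n, (a + i)

/-- The generalized harmonic number `H_n^{(s)} = ∑_{k=1}^n 1/k^s`. -/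
noncomputable def genHarmonic (s n : ℕ) : ℝ :=
  ∑ k ∈ Finset.range n, 1 / ((k : ℝ) + 1) ^ s

/-!
The summand is `2 / 3` of the boundary value `F n 0 + G n 0` of a Wilf–Zeilberger pair, that is, of
functions with `F n (k + 1) - F (n + 1) k = G n k - G n (k + 1)`. Summing this relation over `k`
shows that `F n 0 + G n 0` is the difference of consecutive row sums of `F`, so the boundary values
sum to `∑ k, F 0 k`, which is `5 ζ(5) - 2 ζ(2, 3) - 2 ζ(4, 1)`. Three relations of Euler among the
double zeta values of weight five reduce this to `-8 ζ(5) + 6 ζ(2) ζ(3)`: the two expansions of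
`ζ(2) ζ(3)`, by comparing summation indices and by partial fractions, and the sum formula. The last
two both come from summing `1 / (x ^ a * y ^ b * (x + y) ^ c)` along the antidiagonals.
-/

open Filter Finset
open scoped Topology

theorem hasSum_sub_succ {E : Type*} [AddCommGroup E] [TopologicalSpace E] [IsTopologicalAddGroup E]
    {f : ℕ → E} (hf : Summable f) : HasSum (fun n => f n - f (n + 1)) (f 0) := by
  have h := hf.hasSum.sub ((hasSum_nat_add_iff' 1).2 hf.hasSum)
  simpa only [range_one, sum_singleton, sub_sub_cancel] using h

theorem hasSum_boundary_of_wzPair {E : Type*} [AddCommGroup E] [TopologicalSpace E]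
    [IsTopologicalAddGroup E] [T2Space E] {F G : ℕ → ℕ → E}
    (hFG : ∀ n k, F n (k + 1) - F (n + 1) k = G n k - G n (k + 1))
    (hF : ∀ n, Summable (F n)) (hG : ∀ n, Tendsto (G n) atTop (𝓝 0))
    (hsum : Summable fun n => ∑' k, F n k) :
    HasSum (fun n => F n 0 + G n 0) (∑' k, F 0 k) := by
  refine (hasSum_sub_succ hsum).congr_fun fun n => ?_
  have htail : Summable fun k => F n (k + 1) := (summable_nat_add_iff 1).2 (hF n)
  have hdiff : ∑' k, F n (k + 1) - ∑' k, F (n + 1) k = G n 0 := by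
    rw [← htail.tsum_sub (hF (n + 1))]
    refine tendsto_nhds_unique (htail.sub (hF (n + 1))).hasSum.tendsto_sum_nat ?_
    simp_rw [hFG, sum_range_sub']
    simpa only [sub_zero] using (hG n).const_sub (G n 0)
  rw [(hF n).tsum_eq_zero_add, add_sub_assoc, hdiff]

theorem risingFactorial_succ (a : ℝ) (n : ℕ) :
    risingFactorial a (n + 1) = risingFactorial a n * (a + n) :=
  prod_range_succ _ n

theorem risingFactorial_one (n : ℕ) : risingFactorial 1 n = n.factorial := by
  induction n with
  | zero => simp [risingFactorial]
  | succ n ih =>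
    rw [risingFactorial_succ, ih, Nat.factorial_succ]
    push_cast
    ring

theorem risingFactorial_one_half (n : ℕ) :
    risingFactorial (1 / 2) n = (2 * n).factorial / (4 ^ n * n.factorial) := by
  induction n with
  | zero => simp [risingFactorial]
  | succ n ih =>
    rw [risingFactorial_succ, ih, show 2 * (n + 1) = 2 * n + 1 + 1 by ring, Nat.factorial_succ,
      Nat.factorial_succ, Nat.factorial_succ]
    push_cast
    field_simp
    ring

theorem genHarmonic_zero (s : ℕ) : genHarmonic s 0 = 0 := by
  simp [genHarmonic]

theorem genHarmonic_succ (s n : ℕ) :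
    genHarmonic s (n + 1) = genHarmonic s n + 1 / ((n : ℝ) + 1) ^ s :=
  sum_range_succ _ n

theorem genHarmonic_nonneg (s n : ℕ) : 0 ≤ genHarmonic s n :=
  sum_nonneg fun _ _ => by positivity

theorem genHarmonic_mono (s : ℕ) : Monotone (genHarmonic s) :=
  monotone_nat_of_le_succ fun n => by
    rw [genHarmonic_succ]
    exact le_add_of_nonneg_right (by positivity)

theorem genHarmonic_add_le (s n j : ℕ) : genHarmonic s (n + j) ≤ genHarmonic s n + j := by
  induction j with
  | zero => simp
  | succ j ih =>
    have hterm : 1 / (((n + j : ℕ) : ℝ) + 1) ^ s ≤ 1 :=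
      div_le_one_of_le₀ (one_le_pow₀ (by linarith [(n + j).cast_nonneg (α := ℝ)])) (by positivity)
    rw [← Nat.add_assoc, genHarmonic_succ]
    push_cast at hterm ⊢
    linarith

theorem genHarmonic_succ_le_two_sub {s : ℕ} (hs : 2 ≤ s) (n : ℕ) :
    genHarmonic s (n + 1) ≤ 2 - 1 / ((n : ℝ) + 1) := by
  induction n with
  | zero => norm_num [genHarmonic]
  | succ n ih =>
    have hterm : 1 / ((n : ℝ) + 1 + 1) ^ s ≤ 1 / ((n : ℝ) + 1) - 1 / ((n : ℝ) + 1 + 1) :=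
      calc 1 / ((n : ℝ) + 1 + 1) ^ s ≤ 1 / ((n : ℝ) + 1 + 1) ^ 2 :=
            one_div_le_one_div_of_le (by positivity)
              (pow_le_pow_right₀ (by linarith [n.cast_nonneg (α := ℝ)]) hs)
        _ ≤ 1 / (((n : ℝ) + 1) * ((n : ℝ) + 1 + 1)) :=
            one_div_le_one_div_of_le (by positivity) (by nlinarith)
        _ = 1 / ((n : ℝ) + 1) - 1 / ((n : ℝ) + 1 + 1) := by
            field_simp
            ring
    rw [genHarmonic_succ]
    push_cast
    linarith

theorem genHarmonic_le_two {s : ℕ} (hs : 2 ≤ s) (n : ℕ) : genHarmonic s n ≤ 2 :=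
  calc genHarmonic s n ≤ genHarmonic s (n + 1) := genHarmonic_mono s n.le_succ
    _ ≤ 2 - 1 / ((n : ℝ) + 1) := genHarmonic_succ_le_two_sub hs n
    _ ≤ 2 := sub_le_self _ (by positivity)

theorem genHarmonic_le_two_mul_sqrt {s : ℕ} (hs : s ≠ 0) (n : ℕ) :
    genHarmonic s n ≤ 2 * √(n : ℝ) := by
  induction n with
  | zero => simp [genHarmonic_zero]
  | succ n ih =>
    have hpow : 1 / ((n : ℝ) + 1) ^ s ≤ 1 / ((n : ℝ) + 1) :=
      one_div_le_one_div_of_le (by positivity) (le_self_pow₀ (by simp) hs)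
    have hsqrt : 1 / ((n : ℝ) + 1) ≤ 2 * (√((n : ℝ) + 1) - √n) := by
      have hone : 1 ≤ √((n : ℝ) + 1) := Real.one_le_sqrt.2 (by simp)
      have hle : √(n : ℝ) ≤ √((n : ℝ) + 1) := Real.sqrt_le_sqrt (by simp)
      have hsq := Real.sq_sqrt (n.cast_nonneg (α := ℝ))
      have hsq' := Real.sq_sqrt (by positivity : (0 : ℝ) ≤ n + 1)
      rw [div_le_iff₀ (by positivity)]
      nlinarith [mul_nonneg (sub_nonneg.2 hle) (sub_nonneg.2 hone), Real.sqrt_nonneg (n : ℝ),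
        mul_nonneg (mul_nonneg (sub_nonneg.2 hle) (sub_nonneg.2 hone)) (zero_le_one.trans hone)]
    rw [genHarmonic_succ]
    push_cast
    linarith

theorem summable_sqrt_div_add_one_sq :
    Summable fun k : ℕ => √((k : ℝ) + 1) / ((k : ℝ) + 1) ^ 2 := by
  have h := (summable_nat_add_iff 1).2
    (Real.summable_nat_rpow_inv.2 (by norm_num : (1 : ℝ) < 3 / 2))
  refine h.congr fun k => ?_
  have hk : (0 : ℝ) < (k : ℝ) + 1 := by positivity
  push_cast
  rw [Real.sqrt_eq_rpow, ← Real.rpow_natCast, ← Real.rpow_sub hk, ← Real.rpow_neg hk.le]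
  norm_num

/-- The real zeta value `ζ(s) = ∑_{n ≥ 1} 1 / n ^ s`; it is meaningful for `s ≥ 2`. -/
noncomputable def zetaValue (s : ℕ) : ℝ := ∑' n : ℕ, 1 / ((n : ℝ) + 1) ^ s

/-- The double zeta value `ζ(p, q) = ∑_{n > m ≥ 1} 1 / (n ^ p * m ^ q)`, with the inner sum over `m`
written as a harmonic number; it is meaningful for `p ≥ 2`. -/
noncomputable def doubleZeta (p q : ℕ) : ℝ :=
  ∑' n : ℕ, genHarmonic q n / ((n : ℝ) + 1) ^ p

theorem hasSum_zetaValue {s : ℕ} (hs : 2 ≤ s) :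
    HasSum (fun n : ℕ => 1 / ((n : ℝ) + 1) ^ s) (zetaValue s) := by
  have h := (summable_nat_add_iff 1).2 (Real.summable_one_div_nat_pow.2 hs)
  exact (h.congr fun n => by push_cast; rfl).hasSum

theorem riemannZeta_eq_zetaValue {s : ℕ} (hs : 1 < s) : riemannZeta s = zetaValue s := by
  rw [zeta_eq_tsum_one_div_nat_add_one_cpow (by simpa using hs), zetaValue, Complex.ofReal_tsum]
  refine tsum_congr fun n => ?_
  rw [Complex.cpow_natCast]
  push_cast
  rfl

theorem zetaValue_two : zetaValue 2 = Real.pi ^ 2 / 6 := by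
  have h := (hasSum_nat_add_iff' 1).2 hasSum_zeta_two
  simpa [zetaValue] using h.tsum_eq

theorem tendsto_genHarmonic {s : ℕ} (hs : 2 ≤ s) :
    Tendsto (genHarmonic s) atTop (𝓝 (zetaValue s)) :=
  (hasSum_zetaValue hs).tendsto_sum_nat

theorem hasSum_doubleZeta {p q : ℕ} (hp : 2 ≤ p) (hq : q ≠ 0) :
    HasSum (fun n : ℕ => genHarmonic q n / ((n : ℝ) + 1) ^ p) (doubleZeta p q) := by
  refine (Summable.of_nonneg_of_le (fun n => div_nonneg (genHarmonic_nonneg q n) (by positivity))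
    (fun n => ?_) (summable_sqrt_div_add_one_sq.mul_left 2)).hasSum
  rw [← mul_div_assoc]
  have hsqrt : √(n : ℝ) ≤ √((n : ℝ) + 1) := Real.sqrt_le_sqrt (by simp)
  have hone : 1 ≤ (n : ℝ) + 1 := by simp
  gcongr
  linarith [genHarmonic_le_two_mul_sqrt hq n]

theorem hasSum_doubleZeta_succ {p q : ℕ} (hp : 2 ≤ p) (hq : q ≠ 0) :
    HasSum (fun n : ℕ => genHarmonic q (n + 1) / ((n : ℝ) + 2) ^ p) (doubleZeta p q) := by
  have h := (hasSum_nat_add_iff' 1).2 (hasSum_doubleZeta hp hq)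
  simp only [range_one, sum_singleton, genHarmonic_zero, zero_div, sub_zero] at h
  refine h.congr_fun fun n => ?_
  push_cast
  ring

theorem genHarmonic_mul_genHarmonic (p q N : ℕ) :
    genHarmonic p N * genHarmonic q N =
      ∑ n ∈ range N, genHarmonic q n / ((n : ℝ) + 1) ^ p +
        ∑ n ∈ range N, genHarmonic p n / ((n : ℝ) + 1) ^ q + genHarmonic (p + q) N := by
  induction N with
  | zero => simp [genHarmonic_zero]
  | succ N ih =>
    simp only [sum_range_succ, genHarmonic_succ]
    linear_combination ih

theorem zetaValue_mul_zetaValue {p q : ℕ} (hp : 2 ≤ p) (hq : 2 ≤ q) :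
    zetaValue p * zetaValue q = doubleZeta p q + doubleZeta q p + zetaValue (p + q) := by
  refine tendsto_nhds_unique ((tendsto_genHarmonic hp).mul (tendsto_genHarmonic hq)) ?_
  simp_rw [genHarmonic_mul_genHarmonic]
  exact ((hasSum_doubleZeta hp (by lia)).tendsto_sum_nat.add
    (hasSum_doubleZeta hq (by lia)).tendsto_sum_nat).add (tendsto_genHarmonic (by lia))

section PartialFractions
variable {K : Type*} [Field K]

/-- With `z = x + y`, the terms involving `x` in the partial fraction expansion of
`1 / (x ^ (a + 1) * y ^ (b + 1))`. -/
def partialFractionSum (a b : ℕ) (x z : K) : K :=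
  ∑ p ∈ antidiagonal a, ((b + p.1).choose b : K) / (z ^ (b + p.1 + 1) * x ^ (p.2 + 1))

theorem partialFractionSum_zero_left (b : ℕ) (x z : K) :
    partialFractionSum 0 b x z = 1 / (z ^ (b + 1) * x) := by
  simp [partialFractionSum]

theorem partialFractionSum_succ_zero (a : ℕ) (x z : K) :
    partialFractionSum (a + 1) 0 x z = (partialFractionSum a 0 x z + 1 / x ^ (a + 2)) / z := by
  simp only [partialFractionSum, Nat.sum_antidiagonal_succ, add_div, sum_div, div_div]
  rw [add_comm]
  congr 1
  · refine sum_congr rfl fun p _ => ?_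
    simp only [zero_add, Nat.choose_zero_right, Nat.cast_one]
    ring
  · simp only [add_zero, Nat.choose_self, Nat.cast_one, zero_add, pow_one]
    ring

theorem partialFractionSum_succ_succ (a b : ℕ) (x z : K) :
    partialFractionSum (a + 1) (b + 1) x z =
      (partialFractionSum (a + 1) b x z + partialFractionSum a (b + 1) x z) / z := by
  have pascal (i : ℕ) : ((b + 1 + (i + 1)).choose (b + 1) : K) =
      (b + (i + 1)).choose b + (b + 1 + i).choose (b + 1) := by
    rw [← Nat.add_assoc, Nat.choose_succ_succ, Nat.add_right_comm b 1 i, Nat.add_assoc b i 1]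
    push_cast
    rfl
  simp only [partialFractionSum, Nat.sum_antidiagonal_succ, pascal, add_div, sum_div,
    sum_add_distrib, div_div]
  rw [← add_assoc]
  congr 1
  · congr 1
    · simp only [add_zero, Nat.choose_self, Nat.cast_one]
      ring
    · refine sum_congr rfl fun p _ => ?_
      ring
  · refine sum_congr rfl fun p _ => ?_
    ring

theorem one_div_pow_mul_pow_eq_partialFractionSum {x y : K} (hx : x ≠ 0) (hy : y ≠ 0)
    (hxy : x + y ≠ 0) (a b : ℕ) :
    1 / (x ^ (a + 1) * y ^ (b + 1)) =
      partialFractionSum a b x (x + y) + partialFractionSum b a y (x + y) := by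
  induction a generalizing b with
  | zero =>
    induction b with
    | zero =>
      simp only [partialFractionSum_zero_left]
      field_simp
      ring
    | succ b ih =>
      rw [partialFractionSum_succ_zero, eq_sub_of_add_eq' ih.symm]
      simp only [partialFractionSum_zero_left]
      field_simp
      ring
  | succ a iha =>
    induction b with
    | zero =>
      rw [partialFractionSum_succ_zero, eq_sub_of_add_eq (iha 0).symm]
      simp only [partialFractionSum_zero_left]
      field_simp
      ring
    | succ b ihb =>
      have hsplit : 1 / (x ^ (a + 1 + 1) * y ^ (b + 1 + 1)) =
          (1 / (x ^ (a + 1) * y ^ (b + 1 + 1)) + 1 / (x ^ (a + 1 + 1) * y ^ (b + 1))) /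
            (x + y) := by
        field_simp
        ring
      rw [hsplit, iha, ihb, partialFractionSum_succ_succ, partialFractionSum_succ_succ]
      ring

end PartialFractions

theorem sum_antidiagonal_one_div_fst (s n : ℕ) :
    ∑ x ∈ antidiagonal n, 1 / ((x.1 : ℝ) + 1) ^ s = genHarmonic s (n + 1) := by
  rw [Nat.sum_antidiagonal_eq_sum_range_succ fun i _ => 1 / ((i : ℝ) + 1) ^ s, genHarmonic]

theorem hasSum_antidiagonal_partialFractionSum (a b c : ℕ) (hbc : b + c ≠ 0) :
    HasSum (fun n : ℕ => ∑ x ∈ antidiagonal n,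
        partialFractionSum a b ((x.1 : ℝ) + 1) (n + 2) / ((n : ℝ) + 2) ^ c)
      (∑ p ∈ antidiagonal a,
        ((b + p.1).choose b : ℝ) * doubleZeta (b + p.1 + 1 + c) (p.2 + 1)) := by
  have h := hasSum_sum fun (p : ℕ × ℕ) (_ : p ∈ antidiagonal a) =>
    (hasSum_doubleZeta_succ (p := b + p.1 + 1 + c) (q := p.2 + 1) (by lia) (by lia)).mul_left
      ((b + p.1).choose b : ℝ)
  refine h.congr_fun fun n => ?_
  simp only [partialFractionSum, sum_div]
  rw [sum_comm]
  refine sum_congr rfl fun p _ => ?_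
  rw [← sum_antidiagonal_one_div_fst, sum_div, mul_sum]
  refine sum_congr rfl fun x _ => ?_
  field_simp
  ring

theorem hasSum_tornheim (a b c : ℕ) (hac : a + c ≠ 0) (hbc : b + c ≠ 0) :
    HasSum (fun x : ℕ × ℕ => 1 / (((x.1 : ℝ) + 1) ^ (a + 1) * ((x.2 : ℝ) + 1) ^ (b + 1)) /
        ((x.1 : ℝ) + x.2 + 2) ^ c)
      (∑ p ∈ antidiagonal a, ((b + p.1).choose b : ℝ) * doubleZeta (b + p.1 + 1 + c) (p.2 + 1) +
        ∑ p ∈ antidiagonal b,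
          ((a + p.1).choose a : ℝ) * doubleZeta (a + p.1 + 1 + c) (p.2 + 1)) := by
  have hdiag := (hasSum_antidiagonal_partialFractionSum a b c hbc).add
    (hasSum_antidiagonal_partialFractionSum b a c hac)
  rw [← HasAntidiagonal.sigmaAntidiagonalEquivProd.hasSum_iff]
  have hrow (n : ℕ) : ∑ x ∈ antidiagonal n,
      1 / (((x.1 : ℝ) + 1) ^ (a + 1) * ((x.2 : ℝ) + 1) ^ (b + 1)) / ((x.1 : ℝ) + x.2 + 2) ^ c =
      ∑ x ∈ antidiagonal n,
        partialFractionSum a b ((x.1 : ℝ) + 1) (n + 2) / ((n : ℝ) + 2) ^ c +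
      ∑ x ∈ antidiagonal n,
        partialFractionSum b a ((x.1 : ℝ) + 1) (n + 2) / ((n : ℝ) + 2) ^ c := by
    rw [← Nat.sum_antidiagonal_swap (f := fun x =>
      partialFractionSum b a ((x.1 : ℝ) + 1) (n + 2) / ((n : ℝ) + 2) ^ c), ← sum_add_distrib]
    refine sum_congr rfl fun x hx => ?_
    rw [one_div_pow_mul_pow_eq_partialFractionSum (by positivity) (by positivity) (by positivity),
      ← mem_antidiagonal.1 hx]
    push_cast [Prod.fst_swap]
    ring_nf
  have hsigma := hdiag.congr_fun hrow
  have hfiber (n : ℕ) := (antidiagonal n).hasSum fun x : ℕ × ℕ =>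
      1 / (((x.1 : ℝ) + 1) ^ (a + 1) * ((x.2 : ℝ) + 1) ^ (b + 1)) / ((x.1 : ℝ) + x.2 + 2) ^ c
  refine HasSum.sigma_of_hasSum hsigma hfiber ?_
  refine (summable_sigma_of_nonneg fun x => ?_).2 ⟨fun n => (hfiber n).summable, ?_⟩
  · simp only [Function.comp_apply]
    positivity
  · exact hsigma.summable.congr fun n => ((hfiber n).tsum_eq).symm

theorem zetaValue_mul_zetaValue_eq_sum (a b : ℕ) :
    zetaValue (a + 2) * zetaValue (b + 2) =
      ∑ p ∈ antidiagonal (a + 1), ((b + 1 + p.1).choose (b + 1) : ℝ) *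
          doubleZeta (b + p.1 + 2) (p.2 + 1) +
        ∑ p ∈ antidiagonal (b + 1), ((a + 1 + p.1).choose (a + 1) : ℝ) *
          doubleZeta (a + p.1 + 2) (p.2 + 1) := by
  have ha := hasSum_zetaValue (s := a + 2) (by lia)
  have hb := hasSum_zetaValue (s := b + 2) (by lia)
  have hprod := ha.mul hb (ha.summable.mul_of_nonneg hb.summable
    (fun _ => by positivity) fun _ => by positivity)
  have h := hasSum_tornheim (a + 1) (b + 1) 0 (by simp) (by simp)
  refine (hprod.unique (h.congr_fun fun x => ?_)).trans ?_
  · rw [pow_zero, div_one, one_div_mul_one_div]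
  · simp only [Nat.add_zero, Nat.add_right_comm _ 1]

theorem hasSum_one_div_sub_one_div (a : ℕ) :
    HasSum (fun d : ℕ => 1 / ((d : ℝ) + 1) - 1 / ((d : ℝ) + 1 + a)) (genHarmonic 1 a) := by
  induction a with
  | zero => simp [genHarmonic_zero]
  | succ a ih =>
    have hstep : HasSum (fun d : ℕ => 1 / ((d : ℝ) + 1 + a) - 1 / ((d : ℝ) + 1 + a + 1))
        (1 / ((a : ℝ) + 1)) := by
      rw [hasSum_iff_tendsto_nat_of_nonneg fun d => sub_nonneg.2 <|
        one_div_le_one_div_of_le (by positivity) (by simp)]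
      have htel (N : ℕ) : ∑ d ∈ range N, (1 / ((d : ℝ) + 1 + a) - 1 / ((d : ℝ) + 1 + a + 1)) =
          1 / ((a : ℝ) + 1) - 1 / ((N : ℝ) + (1 + a)) := by
        have h := sum_range_sub' (fun d : ℕ => 1 / ((d : ℝ) + (1 + a))) N
        simpa [add_comm, add_left_comm] using h
      have hlim : Tendsto (fun N : ℕ => 1 / ((N : ℝ) + (1 + a))) atTop (𝓝 0) :=
        (tendsto_atTop_add_const_right _ _ tendsto_natCast_atTop_atTop).const_div_atTop 1
      simpa only [htel, sub_zero] using hlim.const_sub (1 / ((a : ℝ) + 1))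
    rw [genHarmonic_succ, pow_one]
    refine (ih.add hstep).congr_fun fun d => ?_
    push_cast
    ring

theorem hasSum_tornheim_row (a j : ℕ) :
    HasSum (fun d : ℕ => 1 / (((j : ℝ) + 1) ^ (a + 1) * ((d : ℝ) + 1)) / ((j : ℝ) + d + 2))
      (genHarmonic 1 j / ((j : ℝ) + 1) ^ (a + 2) + 1 / ((j : ℝ) + 1) ^ (a + 3)) := by
  have h := (hasSum_one_div_sub_one_div (j + 1)).mul_left (1 / ((j : ℝ) + 1) ^ (a + 2))
  have hvalue : 1 / ((j : ℝ) + 1) ^ (a + 2) * genHarmonic 1 (j + 1) =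
      genHarmonic 1 j / ((j : ℝ) + 1) ^ (a + 2) + 1 / ((j : ℝ) + 1) ^ (a + 3) := by
    rw [genHarmonic_succ]
    field_simp
    ring
  rw [← hvalue]
  refine h.congr_fun fun d => ?_
  have hden : (d : ℝ) + 1 + (j + 1) ≠ 0 := by positivity
  have hden' : (j : ℝ) + d + 2 ≠ 0 := by positivity
  push_cast
  field_simp
  ring

theorem sum_antidiagonal_doubleZeta (a : ℕ) :
    ∑ p ∈ antidiagonal a, doubleZeta (p.1 + 2) (p.2 + 1) = zetaValue (a + 3) := by
  have hrows := (hasSum_doubleZeta (p := a + 2) (by lia) one_ne_zero).add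
    (hasSum_zetaValue (s := a + 3) (by lia))
  have h := hasSum_tornheim a 0 1 (by simp) (by simp)
  simp only [zero_add, pow_one, Nat.choose_zero_right, Nat.cast_one, one_mul, Nat.antidiagonal_zero,
    sum_singleton, Nat.add_zero, Nat.choose_self] at h
  have htotal := (h.prod_fiberwise (hasSum_tornheim_row a)).unique hrows
  exact add_right_cancel (htotal.trans (add_comm _ _))

/-- The hypergeometric factor common to both members of the Wilf–Zeilberger pair. -/
noncomputable def wzWeight (n k : ℕ) : ℝ :=
  (-1) ^ n * (n.factorial : ℝ) ^ 2 * k.factorial / ((2 * n + 1 + k).factorial : ℝ)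

theorem wzWeight_succ_right (n k : ℕ) :
    wzWeight n (k + 1) = wzWeight n k * (((k : ℝ) + 1) / (2 * (n : ℝ) + 2 + k)) := by
  rw [wzWeight, wzWeight, ← Nat.add_assoc, Nat.factorial_succ, Nat.factorial_succ]
  push_cast
  field_simp
  ring

theorem wzWeight_succ_left (n k : ℕ) :
    wzWeight (n + 1) k = -(wzWeight n k * (((n : ℝ) + 1) ^ 2 /
      ((2 * (n : ℝ) + 2 + k) * (2 * (n : ℝ) + 3 + k)))) := by
  rw [wzWeight, wzWeight, show 2 * (n + 1) + 1 + k = 2 * n + 1 + k + 1 + 1 by ring,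
    Nat.factorial_succ, Nat.factorial_succ (_ + 1), Nat.factorial_succ (2 * n + 1 + k)]
  push_cast
  field_simp
  ring

/-- The combination of harmonic numbers of order three in the Wilf–Zeilberger pair. -/
noncomputable def wzCubic (n k : ℕ) : ℝ :=
  genHarmonic 3 n - 2 * genHarmonic 3 (n + 1 + k)

/-- The combination of harmonic numbers of order one in the Wilf–Zeilberger pair. -/
noncomputable def wzLinear (n k : ℕ) : ℝ :=
  genHarmonic 1 (2 * n + 1 + k) - genHarmonic 1 (n + 1 + k) - genHarmonic 1 k
    - (genHarmonic 1 (2 * n) - genHarmonic 1 n)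

theorem wzCubic_succ_right (n k : ℕ) :
    wzCubic n (k + 1) = wzCubic n k - 2 / ((n : ℝ) + 2 + k) ^ 3 := by
  rw [wzCubic, wzCubic, ← Nat.add_assoc, genHarmonic_succ _ (n + 1 + k)]
  push_cast
  ring

theorem wzCubic_succ_left (n k : ℕ) :
    wzCubic (n + 1) k = wzCubic n k + 1 / ((n : ℝ) + 1) ^ 3 - 2 / ((n : ℝ) + 2 + k) ^ 3 := by
  rw [wzCubic, wzCubic, Nat.add_right_comm (n + 1) 1, genHarmonic_succ _ (n + 1 + k),
    genHarmonic_succ _ n]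
  push_cast
  ring

theorem wzLinear_succ_right (n k : ℕ) :
    wzLinear n (k + 1) =
      wzLinear n k + 1 / (2 * (n : ℝ) + 2 + k) - 1 / ((n : ℝ) + 2 + k) - 1 / ((k : ℝ) + 1) := by
  rw [wzLinear, wzLinear, ← Nat.add_assoc, ← Nat.add_assoc, genHarmonic_succ _ (2 * n + 1 + k),
    genHarmonic_succ _ (n + 1 + k), genHarmonic_succ _ k]
  push_cast
  ring

theorem wzLinear_succ_left (n k : ℕ) :
    wzLinear (n + 1) k =
      wzLinear n k + 1 / (2 * (n : ℝ) + 2 + k) + 1 / (2 * (n : ℝ) + 3 + k)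
        - 1 / ((n : ℝ) + 2 + k) - (1 / (2 * (n : ℝ) + 1) + 1 / (2 * (n : ℝ) + 2)
        - 1 / ((n : ℝ) + 1)) := by
  rw [wzLinear, wzLinear, show 2 * (n + 1) + 1 + k = 2 * n + 1 + k + 1 + 1 by ring,
    Nat.add_right_comm (n + 1) 1, show 2 * (n + 1) = 2 * n + 1 + 1 by ring,
    genHarmonic_succ _ (2 * n + 1 + k + 1), genHarmonic_succ _ (2 * n + 1 + k),
    genHarmonic_succ _ (n + 1 + k), genHarmonic_succ _ (2 * n + 1), genHarmonic_succ _ (2 * n),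
    genHarmonic_succ _ n]
  push_cast
  ring

/-- The first member of the Wilf–Zeilberger pair. Its sum over `k` at `n = 0` is a combination of
zeta and double zeta values. -/
noncomputable def wzTerm (n k : ℕ) : ℝ :=
  wzWeight n k / ((n : ℝ) + 1 + k) *
    (5 / ((n : ℝ) + 1 + k) ^ 3 + wzCubic n k +
      2 * (1 / ((n : ℝ) + 1 + k) ^ 2 - genHarmonic 2 n) * (1 / ((n : ℝ) + 1 + k) + wzLinear n k))

/-- The second member of the Wilf–Zeilberger pair: its differences in `k` are those of `wzTerm`
along the diagonals of constant `n + k`. -/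
noncomputable def wzMate (n k : ℕ) : ℝ :=
  wzWeight n k / ((2 * (n : ℝ) + 2 + k) * (2 * n + 1)) *
    (((n : ℝ) + 3 / 2 + k) * wzCubic n k + genHarmonic 2 n *
      (3 - 1 / (2 * (n : ℝ) + 2) - (2 * (n : ℝ) + 3 + 2 * k) *
        (wzLinear n k + 1 / (2 * (n : ℝ) + 2 + k) - 1 / (2 * (n : ℝ) + 1))))

theorem wzTerm_sub_wzTerm (n k : ℕ) :
    wzTerm n (k + 1) - wzTerm (n + 1) k = wzMate n k - wzMate n (k + 1) := by
  simp only [wzTerm, wzMate, wzWeight_succ_right, wzWeight_succ_left, wzCubic_succ_right,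
    wzCubic_succ_left, wzLinear_succ_right, wzLinear_succ_left, genHarmonic_succ 2 n]
  push_cast
  rw [show (n : ℝ) + 1 + 1 + k = n + 2 + k by ring, show (n : ℝ) + 1 + (k + 1) = n + 2 + k by ring,
    show 2 * (n : ℝ) + 2 + (k + 1) = 2 * n + 3 + k by ring]
  -- With the harmonic quantities as indeterminates, this is an identity of rational functions.
  generalize wzWeight n k = W, wzCubic n k = S, wzLinear n k = T, genHarmonic 2 n = Q
  field_simp
  ring

theorem risingFactorial_ratio_eq_wzWeight (n : ℕ) :
    (-1 / 4 : ℝ) ^ (n + 1) * risingFactorial 1 (n + 1) / risingFactorial (1 / 2) (n + 1) =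
      -(wzWeight n 0 * ((n : ℝ) + 1) / 2) := by
  rw [risingFactorial_one, risingFactorial_one_half, wzWeight, div_pow,
    show 2 * (n + 1) = 2 * n + 1 + 1 by ring, Nat.factorial_succ, Nat.factorial_succ (2 * n + 1)]
  push_cast
  simp only [Nat.factorial_zero]
  field_simp
  ring

theorem summand_eq_wzTerm_add_wzMate (n : ℕ) :
    (-1 / 4 : ℝ) ^ (n + 1) * risingFactorial 1 (n + 1) / risingFactorial (1 / 2) (n + 1) *
        ((10 * ((n : ℝ) + 1) - 3) * genHarmonic 3 (n + 1) /
            (3 * ((n : ℝ) + 1) ^ 2 * (2 * ((n : ℝ) + 1) - 1)) -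
          (38 * ((n : ℝ) + 1) - 17) / (3 * ((n : ℝ) + 1) ^ 5 * (2 * ((n : ℝ) + 1) - 1))) =
      2 / 3 * (wzTerm n 0 + wzMate n 0) := by
  rw [risingFactorial_ratio_eq_wzWeight, wzTerm, wzMate, wzCubic, wzLinear,
    show 2 * ((n : ℝ) + 1) - 1 = 2 * n + 1 by ring]
  simp only [Nat.add_zero, genHarmonic_succ, genHarmonic_zero, Nat.cast_zero]
  push_cast
  field_simp
  ring

theorem wzWeight_zero_left (k : ℕ) : wzWeight 0 k = 1 / ((k : ℝ) + 1) := by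
  rw [wzWeight, mul_zero, zero_add, Nat.add_comm, Nat.factorial_succ]
  push_cast
  simp only [Nat.factorial_zero, pow_zero, Nat.cast_one, one_pow, one_mul]
  field_simp

theorem wzTerm_zero_left (k : ℕ) :
    wzTerm 0 k = 5 * (1 / ((k : ℝ) + 1) ^ 5) - 2 * (genHarmonic 3 k / ((k : ℝ) + 1) ^ 2) -
      2 * (genHarmonic 1 k / ((k : ℝ) + 1) ^ 4) := by
  rw [wzTerm, wzWeight_zero_left, wzCubic, wzLinear, mul_zero, zero_add, Nat.add_comm 1 k]
  simp only [genHarmonic_succ, genHarmonic_zero, Nat.cast_zero, zero_add, add_comm (1 : ℝ)]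
  field_simp
  ring

theorem abs_wzWeight_zero_right_le (n : ℕ) : |wzWeight n 0| ≤ (1 / 4) ^ n := by
  induction n with
  | zero => simp [wzWeight]
  | succ n ih =>
    have hratio : ((n : ℝ) + 1) ^ 2 / ((2 * (n : ℝ) + 2 + (0 : ℕ)) * (2 * (n : ℝ) + 3 + (0 : ℕ))) ≤
        1 / 4 := by
      rw [div_le_div_iff₀ (by positivity) (by positivity)]
      push_cast
      nlinarith [n.cast_nonneg (α := ℝ)]
    rw [wzWeight_succ_left, abs_neg, abs_mul, abs_of_nonneg (a := _ / _) (by positivity),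
      pow_succ (1 / 4 : ℝ) n]
    exact mul_le_mul ih hratio (by positivity) (by positivity)

theorem abs_wzWeight_le (n k : ℕ) : |wzWeight n k| ≤ (1 / 4) ^ n / ((k : ℝ) + 1) := by
  induction k with
  | zero => simpa using abs_wzWeight_zero_right_le n
  | succ k ih =>
    rw [wzWeight_succ_right, abs_mul, abs_of_nonneg (a := _ / _) (by positivity)]
    calc |wzWeight n k| * (((k : ℝ) + 1) / (2 * (n : ℝ) + 2 + k))
        ≤ (1 / 4) ^ n / ((k : ℝ) + 1) * (((k : ℝ) + 1) / ((k : ℝ) + 1 + 1)) := by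
          gcongr ?_ * (_ / ?_)
          linarith [n.cast_nonneg (α := ℝ)]
      _ = (1 / 4) ^ n / ((k + 1 : ℕ) + 1) := by
          push_cast
          field_simp

theorem abs_wzCubic_le (n k : ℕ) : |wzCubic n k| ≤ 4 := by
  have hn := genHarmonic_le_two (by simp : 2 ≤ 3) n
  have hm := genHarmonic_le_two (by simp : 2 ≤ 3) (n + 1 + k)
  have hn₀ := genHarmonic_nonneg 3 n
  have hm₀ := genHarmonic_nonneg 3 (n + 1 + k)
  rw [wzCubic, abs_le]
  constructor <;> linarith

theorem abs_wzLinear_le (n k : ℕ) : |wzLinear n k| ≤ 2 * (((n : ℝ) + 1) * √((k : ℝ) + 1)) := by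
  have hsqrt : 1 ≤ √((k : ℝ) + 1) := Real.one_le_sqrt.2 (by simp)
  have hgrow : √(k : ℝ) ≤ √((k : ℝ) + 1) := Real.sqrt_le_sqrt (by simp)
  have hupper := genHarmonic_add_le 1 (n + 1 + k) n
  have hlower := genHarmonic_mono 1 (Nat.le_add_right (n + 1 + k) n)
  have hupper' := genHarmonic_add_le 1 n n
  have hlower' := genHarmonic_mono 1 (Nat.le_add_right n n)
  have hk := genHarmonic_le_two_mul_sqrt one_ne_zero k
  have hk₀ := genHarmonic_nonneg 1 k
  rw [wzLinear, show 2 * n + 1 + k = n + 1 + k + n by ring, two_mul n, abs_le]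
  constructor <;> nlinarith

theorem abs_wzTerm_le (n k : ℕ) :
    |wzTerm n k| ≤ 27 * (((n : ℝ) + 1) * (1 / 4) ^ n) * (√((k : ℝ) + 1) / ((k : ℝ) + 1) ^ 2) := by
  set B : ℝ := ((n : ℝ) + 1) * √((k : ℝ) + 1) with hB
  have hB1 : 1 ≤ B := one_le_mul_of_one_le_of_one_le (by simp) (Real.one_le_sqrt.2 (by simp))
  have hm : 1 / ((n : ℝ) + 1 + k) ≤ 1 / ((k : ℝ) + 1) :=
    one_div_le_one_div_of_le (by positivity) (by linarith [n.cast_nonneg (α := ℝ)])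
  have hpow (j : ℕ) : 0 ≤ 1 / ((n : ℝ) + 1 + k) ^ j ∧ 1 / ((n : ℝ) + 1 + k) ^ j ≤ 1 :=
    ⟨by positivity, div_le_one_of_le₀ (one_le_pow₀ (by
      linarith [n.cast_nonneg (α := ℝ), k.cast_nonneg (α := ℝ)])) (by positivity)⟩
  have hcubic : |5 / ((n : ℝ) + 1 + k) ^ 3 + wzCubic n k| ≤ 9 := by
    have h := abs_le.1 (abs_wzCubic_le n k)
    rw [← mul_one_div, abs_le]
    constructor <;> linarith [hpow 3]
  have hsquare : |1 / ((n : ℝ) + 1 + k) ^ 2 - genHarmonic 2 n| ≤ 2 := by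
    rw [abs_le]
    constructor <;> linarith [hpow 2, genHarmonic_nonneg 2 n, genHarmonic_le_two le_rfl n]
  have hlinear : |1 / ((n : ℝ) + 1 + k) + wzLinear n k| ≤ 3 * B := by
    have h := abs_le.1 (abs_wzLinear_le n k)
    have hpow1 := hpow 1
    rw [pow_one] at hpow1
    rw [abs_le]
    constructor <;> linarith
  calc |wzTerm n k|
      ≤ (1 / 4) ^ n / ((k : ℝ) + 1) * (1 / ((k : ℝ) + 1)) * (9 + 2 * 2 * (3 * B)) := by
        rw [wzTerm, div_eq_mul_one_div, abs_mul, abs_mul,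
          abs_of_nonneg (by positivity : 0 ≤ 1 / ((n : ℝ) + 1 + k))]
        gcongr
        · exact abs_wzWeight_le n k
        · refine (abs_add_le _ _).trans (add_le_add hcubic ?_)
          rw [abs_mul, abs_mul, abs_two]
          gcongr
    _ ≤ (1 / 4) ^ n / ((k : ℝ) + 1) * (1 / ((k : ℝ) + 1)) * (27 * B) := by
        gcongr
        linarith
    _ = 27 * (((n : ℝ) + 1) * (1 / 4) ^ n) * (√((k : ℝ) + 1) / ((k : ℝ) + 1) ^ 2) := by
        rw [hB]
        field_simp

theorem abs_wzMate_factor_le (n k : ℕ) :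
    |((n : ℝ) + 3 / 2 + k) * wzCubic n k + genHarmonic 2 n *
      (3 - 1 / (2 * (n : ℝ) + 2) - (2 * (n : ℝ) + 3 + 2 * k) *
        (wzLinear n k + 1 / (2 * (n : ℝ) + 2 + k) - 1 / (2 * (n : ℝ) + 1)))| ≤
      (2 * (n : ℝ) + 2 + k) * (19 * (((n : ℝ) + 1) * √((k : ℝ) + 1))) := by
  set B : ℝ := ((n : ℝ) + 1) * √((k : ℝ) + 1)
  set D : ℝ := 2 * (n : ℝ) + 2 + k
  have hB1 : 1 ≤ B := one_le_mul_of_one_le_of_one_le (by simp) (Real.one_le_sqrt.2 (by simp))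
  have hD2 : 2 ≤ D := by linarith [n.cast_nonneg (α := ℝ), k.cast_nonneg (α := ℝ)]
  have hunit {x : ℝ} (hx : 1 ≤ x) : 0 ≤ 1 / x ∧ 1 / x ≤ 1 :=
    ⟨by positivity, div_le_one_of_le₀ hx (by positivity)⟩
  have hcubic : |((n : ℝ) + 3 / 2 + k) * wzCubic n k| ≤ D * 4 := by
    rw [abs_mul, abs_of_nonneg (a := (n : ℝ) + 3 / 2 + k) (by positivity)]
    exact mul_le_mul (by linarith) (abs_wzCubic_le n k) (abs_nonneg _) (by positivity)
  have hconst : |3 - 1 / (2 * (n : ℝ) + 2)| ≤ 3 := by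
    rw [abs_le]
    constructor <;> linarith [hunit (by linarith : 1 ≤ 2 * (n : ℝ) + 2)]
  have hlinear : |wzLinear n k + 1 / D - 1 / (2 * (n : ℝ) + 1)| ≤ 3 * B := by
    have h := abs_le.1 (abs_wzLinear_le n k)
    rw [abs_le]
    constructor <;> linarith [hunit (by linarith : 1 ≤ D),
      hunit (by linarith : 1 ≤ 2 * (n : ℝ) + 1)]
  have hsecond : |genHarmonic 2 n * (3 - 1 / (2 * (n : ℝ) + 2) - (2 * (n : ℝ) + 3 + 2 * k) *
      (wzLinear n k + 1 / D - 1 / (2 * (n : ℝ) + 1)))| ≤ 2 * (3 + 2 * D * (3 * B)) := by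
    rw [abs_mul, abs_of_nonneg (genHarmonic_nonneg 2 n)]
    refine mul_le_mul (genHarmonic_le_two le_rfl n) ((abs_sub _ _).trans (add_le_add hconst ?_))
      (abs_nonneg _) zero_le_two
    rw [abs_mul, abs_of_nonneg (a := 2 * (n : ℝ) + 3 + 2 * k) (by positivity)]
    exact mul_le_mul (by linarith) hlinear (abs_nonneg _) (by positivity)
  refine (abs_add_le _ _).trans ((add_le_add hcubic hsecond).trans ?_)
  nlinarith [mul_nonneg (sub_nonneg.2 hD2) (sub_nonneg.2 hB1)]

theorem abs_wzMate_le (n k : ℕ) :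
    |wzMate n k| ≤ 19 * ((n : ℝ) + 1) * (√((k : ℝ) + 1) / ((k : ℝ) + 1)) := by
  have hweight : |wzWeight n k / ((2 * (n : ℝ) + 2 + k) * (2 * n + 1))| ≤
      1 / ((k : ℝ) + 1) / (2 * (n : ℝ) + 2 + k) := by
    rw [abs_div, abs_of_nonneg (a := _ * _) (by positivity), div_div]
    refine (div_le_div₀ (by positivity) (abs_wzWeight_le n k) (by positivity)
      (le_mul_of_one_le_right (by positivity) (by simp))).trans ?_
    rw [div_div]
    gcongr
    exact pow_le_one₀ (by norm_num) (by norm_num)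
  calc |wzMate n k| ≤ 1 / ((k : ℝ) + 1) / (2 * (n : ℝ) + 2 + k) *
        ((2 * (n : ℝ) + 2 + k) * (19 * (((n : ℝ) + 1) * √((k : ℝ) + 1)))) := by
        rw [wzMate, abs_mul]
        exact mul_le_mul hweight (abs_wzMate_factor_le n k) (abs_nonneg _) (by positivity)
    _ = 19 * ((n : ℝ) + 1) * (√((k : ℝ) + 1) / ((k : ℝ) + 1)) := by
        field_simp

theorem tendsto_sqrt_div_add_one_atTop :
    Tendsto (fun k : ℕ => √((k : ℝ) + 1) / ((k : ℝ) + 1)) atTop (𝓝 0) := by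
  simp_rw [Real.sqrt_div_self]
  refine tendsto_inv_atTop_zero.comp (Real.tendsto_sqrt_atTop.comp ?_)
  exact tendsto_atTop_add_const_right _ _ tendsto_natCast_atTop_atTop

theorem tendsto_wzMate (n : ℕ) : Tendsto (wzMate n) atTop (𝓝 0) := by
  refine squeeze_zero_norm (abs_wzMate_le n) ?_
  simpa using tendsto_sqrt_div_add_one_atTop.const_mul (19 * ((n : ℝ) + 1))

theorem summable_wzTerm (n : ℕ) : Summable (wzTerm n) :=
  .of_norm_bounded (summable_sqrt_div_add_one_sq.mul_left _) (abs_wzTerm_le n)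

theorem summable_tsum_wzTerm : Summable fun n => ∑' k, wzTerm n k := by
  have hgeom : Summable fun n : ℕ => ((n : ℝ) + 1) * (1 / 4) ^ n := by
    have hlin := summable_pow_mul_geometric_of_norm_lt_one 1 (by norm_num : ‖(1 / 4 : ℝ)‖ < 1)
    have hconst := summable_geometric_of_norm_lt_one (by norm_num : ‖(1 / 4 : ℝ)‖ < 1)
    exact (hlin.add hconst).congr fun n => by ring
  refine .of_norm_bounded ((hgeom.mul_left 27).mul_right
    (∑' k : ℕ, √((k : ℝ) + 1) / ((k : ℝ) + 1) ^ 2)) fun n => ?_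
  rw [← tsum_mul_left]
  exact tsum_of_norm_bounded (summable_sqrt_div_add_one_sq.mul_left _).hasSum (abs_wzTerm_le n)

theorem tsum_wzTerm_zero :
    ∑' k, wzTerm 0 k = -8 * zetaValue 5 + 6 * (zetaValue 2 * zetaValue 3) := by
  have h := (((hasSum_zetaValue (by simp : 2 ≤ 5)).mul_left 5).sub
    ((hasSum_doubleZeta (le_refl 2) (by simp : 3 ≠ 0)).mul_left 2)).sub
      ((hasSum_doubleZeta (by simp : 2 ≤ 4) one_ne_zero).mul_left 2)
  have hstuffle := zetaValue_mul_zetaValue (le_refl 2) (by simp : 2 ≤ 3)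
  have hshuffle := zetaValue_mul_zetaValue_eq_sum 0 1
  have hsum := sum_antidiagonal_doubleZeta 2
  simp only [zero_add, add_zero, Nat.reduceAdd, Nat.add_eq, Nat.sum_antidiagonal_succ,
    Nat.antidiagonal_zero, sum_singleton, Nat.choose, Nat.choose_one_right, Nat.cast_add,
    Nat.cast_ofNat, Nat.cast_one, Nat.cast_zero, one_mul] at hstuffle hshuffle hsum
  simp_rw [wzTerm_zero_left]
  rw [h.tsum_eq]
  linear_combination -5 * hstuffle - hshuffle - 8 * hsum

/-- `∑_{n≥1} (−1/4)^n (1)ₙ/(1/2)ₙ [ (10n−3)H_n^{(3)}/(3n²(2n−1)) − (38n−17)/(3n^5(2n−1)) ]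
    = −(16/3)ζ(5) + (2/3)π²ζ(3)`. -/
theorem harmonic3_zeta5_series :
    ∑' n : ℕ, ((((-1 / 4 : ℝ) ^ (n + 1) * risingFactorial 1 (n + 1) /
        risingFactorial (1 / 2) (n + 1) *
        ((10 * ((n : ℝ) + 1) - 3) * genHarmonic 3 (n + 1) /
            (3 * ((n : ℝ) + 1) ^ 2 * (2 * ((n : ℝ) + 1) - 1)) -
          (38 * ((n : ℝ) + 1) - 17) /
            (3 * ((n : ℝ) + 1) ^ 5 * (2 * ((n : ℝ) + 1) - 1))) : ℝ)) : ℂ)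
      = -(16 / 3) * riemannZeta 5 + 2 / 3 * (Real.pi : ℂ) ^ 2 * riemannZeta 3 := by
  have hseries := ((hasSum_boundary_of_wzPair wzTerm_sub_wzTerm summable_wzTerm tendsto_wzMate
    summable_tsum_wzTerm).mul_left (2 / 3)).congr_fun summand_eq_wzTerm_add_wzMate
  have h₃ := riemannZeta_eq_zetaValue (by simp : 1 < 3)
  have h₅ := riemannZeta_eq_zetaValue (by simp : 1 < 5)
  rw [Nat.cast_ofNat] at h₃ h₅
  rw [← Complex.ofReal_tsum, hseries.tsum_eq, tsum_wzTerm_zero, zetaValue_two, h₃, h₅]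
  push_cast
  ring
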